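/- Let n ≥ 2 and let σ = (1 2 3 … 2n) ∈ S_{2n} be a 2n-cycle. Then the only vector v ∈ Λ^{2n−2} U_{2n} satisfying σ·v = −v is v = 0; that is, the linear automorphism of Λ^{2n−2} U_{2n} induced by σ has no eigenvector with eigenvalue −1. (Equivalently: the restriction of the hook representation V_{2,1^{2n−2}} of S_{2n} to the cyclic subgroup generated by σ contains no copy of the one-dimensional representation on which σ acts by −1.) -/

import Mathlib

set_option synthInstance.maxHeartbeats 1000000
set_option maxHeartbeats 1000000

noncomputable section

/-- The sum-of-coordinates linear functional on `ℚ^N`. -/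
def sumMap (N : ℕ) : (Fin N → ℚ) →ₗ[ℚ] ℚ := ∑ i, LinearMap.proj i

/-- The standard representation `U_N = {x ∈ ℚ^N : ∑ x_i = 0}` of the symmetric group. -/
def U (N : ℕ) : Submodule ℚ (Fin N → ℚ) := LinearMap.ker (sumMap N)

lemma mem_U {N : ℕ} (x : Fin N → ℚ) : x ∈ U N ↔ ∑ i, x i = 0 := by
  simp [U, sumMap, LinearMap.mem_ker]

/-- The action of a permutation on `ℚ^N` by permuting coordinates. -/
def permMap (N : ℕ) (σ : Equiv.Perm (Fin N)) : (Fin N → ℚ) →ₗ[ℚ] (Fin N → ℚ) :=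
  LinearMap.funLeft ℚ ℚ ⇑σ⁻¹

lemma permMap_mem {N : ℕ} (σ : Equiv.Perm (Fin N)) {x : Fin N → ℚ} (hx : x ∈ U N) :
    permMap N σ x ∈ U N := by
  rw [mem_U] at hx ⊢
  simpa [permMap, LinearMap.funLeft_apply, Function.comp] using
    (Equiv.sum_comp σ⁻¹ x).trans hx

/-- The action of a permutation on the standard representation `U_N`. -/
def permU (N : ℕ) (σ : Equiv.Perm (Fin N)) : ↥(U N) →ₗ[ℚ] ↥(U N) :=
  (permMap N σ).restrict fun _ hx => permMap_mem σ hx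

/-- The induced (diagonal) action on the exterior algebra of `U_N`; it preserves each
exterior power `⋀[ℚ]^k U_N`. -/
def act (N : ℕ) (σ : Equiv.Perm (Fin N)) :
    ExteriorAlgebra ℚ ↥(U N) →ₗ[ℚ] ExteriorAlgebra ℚ ↥(U N) :=
  (ExteriorAlgebra.map (permU N σ)).toLinearMap

/-- The eigenspace of a linear endomorphism for the eigenvalue `c`. -/
def eigen {V : Type*} [AddCommGroup V] [Module ℚ V] (f : V →ₗ[ℚ] V) (c : ℚ) :
    Submodule ℚ V := LinearMap.ker (f - c • LinearMap.id)

/-- `g` belongs to the hyperoctahedral subgroup of `S_N` on the `q` pairs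
`{a+2i, a+2i+1}` (`0 ≤ i < q`), inducing the permutation `τ` on the set of pairs:
`g` fixes every letter outside the pairs, and sends the `i`-th pair to the `τ(i)`-th pair. -/
def IsHypAt (a : ℕ) {N q : ℕ} (g : Equiv.Perm (Fin N)) (τ : Equiv.Perm (Fin q)) : Prop :=
  (∀ i : Fin N, ((i : ℕ) < a ∨ a + 2*q ≤ (i : ℕ)) → g i = i) ∧
  ∀ i : Fin N, ∀ _h1 : a ≤ (i : ℕ), ∀ _h2 : (i : ℕ) < a + 2*q,
    ((g i : ℕ) - a)/2 = ((τ ⟨((i : ℕ) - a)/2, by omega⟩ : Fin q) : ℕ)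

end

section helpers
open Module

variable {M : Type*} [AddCommGroup M] [Module ℚ M]

lemma euler_aux {ι' : Type*} [Fintype ι'] (b : Basis ι' ℚ M) (k : ℕ) (w : Fin k → M) :
    ∑ i, ExteriorAlgebra.ι ℚ (b i) *
      (CliffordAlgebra.contractLeft (Q := (0 : QuadraticForm ℚ M)) (b.coord i)
        (ExteriorAlgebra.ιMulti ℚ k w) : ExteriorAlgebra ℚ M)
      = (k : ℚ) • ExteriorAlgebra.ιMulti ℚ k w := by
  induction k with
  | zero =>
    rw [ExteriorAlgebra.ιMulti_zero_apply]
    have : ∀ i, (CliffordAlgebra.contractLeft (Q := (0 : QuadraticForm ℚ M)) (b.coord i)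
        (1 : ExteriorAlgebra ℚ M) : ExteriorAlgebra ℚ M) = 0 :=
      fun i => CliffordAlgebra.contractLeft_one _ _
    simp [this]
  | succ k ih =>
    rw [ExteriorAlgebra.ιMulti_succ_apply]
    have ih' := ih (Matrix.vecTail w)
    set y := ExteriorAlgebra.ιMulti ℚ k (Matrix.vecTail w) with hy
    have h1 : ∀ i, (CliffordAlgebra.contractLeft (Q := (0 : QuadraticForm ℚ M)) (b.coord i)
        (ExteriorAlgebra.ι ℚ (w 0) * y) : ExteriorAlgebra ℚ M) =
        (b.coord i (w 0)) • y - ExteriorAlgebra.ι ℚ (w 0) *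
          (CliffordAlgebra.contractLeft (Q := (0 : QuadraticForm ℚ M)) (b.coord i) y :
            ExteriorAlgebra ℚ M) :=
      fun i => CliffordAlgebra.contractLeft_ι_mul _ _ _
    have h2 : ∀ i, ExteriorAlgebra.ι ℚ (b i) * ((b.coord i (w 0)) • y -
        ExteriorAlgebra.ι ℚ (w 0) *
          (CliffordAlgebra.contractLeft (Q := (0 : QuadraticForm ℚ M)) (b.coord i) y :
            ExteriorAlgebra ℚ M)) =
        ExteriorAlgebra.ι ℚ (b.repr (w 0) i • b i) * y +
        ExteriorAlgebra.ι ℚ (w 0) * (ExteriorAlgebra.ι ℚ (b i) *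
          (CliffordAlgebra.contractLeft (Q := (0 : QuadraticForm ℚ M)) (b.coord i) y :
            ExteriorAlgebra ℚ M)) := by
      intro i
      have hs := eq_neg_of_add_eq_zero_left (ExteriorAlgebra.ι_add_mul_swap (R := ℚ) (b i) (w 0))
      rw [mul_sub, ← mul_assoc, hs, map_smul, smul_mul_assoc, mul_smul_comm, Basis.coord_apply,
        neg_mul, sub_neg_eq_add, mul_assoc]
    simp_rw [h1, h2]
    rw [Finset.sum_add_distrib, ← Finset.sum_mul, ← map_sum, b.sum_repr, ← Finset.mul_sum, ih',
      mul_smul_comm]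
    push_cast
    rw [add_smul, one_smul, add_comm]

lemma euler_id {ι' : Type*} [Fintype ι'] (b : Basis ι' ℚ M) (k : ℕ) (v : ExteriorAlgebra ℚ M)
    (hv : v ∈ ⋀[ℚ]^k M) :
    ∑ i, ExteriorAlgebra.ι ℚ (b i) *
      (CliffordAlgebra.contractLeft (Q := (0 : QuadraticForm ℚ M)) (b.coord i)
        v : ExteriorAlgebra ℚ M) = (k : ℚ) • v := by
  rw [← ExteriorAlgebra.ιMulti_span_fixedDegree] at hv
  induction hv using Submodule.span_induction with
  | mem x hx =>
    obtain ⟨w, rfl⟩ := hx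
    exact euler_aux b k w
  | zero => simp
  | add x y _ _ hx hy =>
    rw [smul_add, ← hx, ← hy, ← Finset.sum_add_distrib]
    refine Finset.sum_congr rfl fun i _ => ?_
    rw [← mul_add]; congr 1; exact map_add _ _ _
  | smul c x _ hx =>
    rw [smul_comm, ← hx, Finset.smul_sum]
    refine Finset.sum_congr rfl fun i _ => ?_
    rw [← mul_smul_comm]; congr 1; exact map_smul _ _ _

lemma eq_zero_of_wedge {m : ℕ} (b : Basis (Fin m) ℚ M) (k : ℕ) (hk : k ≠ m)
    (v : ExteriorAlgebra ℚ M) (hv : v ∈ ⋀[ℚ]^k M)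
    (h : ∀ u, ExteriorAlgebra.ι ℚ u * v = 0) : v = 0 := by
  have e := euler_id b k v hv
  have h1 : ∀ i, ExteriorAlgebra.ι ℚ (b i) *
      (CliffordAlgebra.contractLeft (Q := (0 : QuadraticForm ℚ M)) (b.coord i)
        v : ExteriorAlgebra ℚ M) = v := by
    intro i
    have h2 : (CliffordAlgebra.contractLeft (Q := (0 : QuadraticForm ℚ M)) (b.coord i)
        (ExteriorAlgebra.ι ℚ (b i) * v) : ExteriorAlgebra ℚ M) =
        (b.coord i (b i)) • v - ExteriorAlgebra.ι ℚ (b i) *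
          (CliffordAlgebra.contractLeft (Q := (0 : QuadraticForm ℚ M)) (b.coord i) v :
            ExteriorAlgebra ℚ M) := CliffordAlgebra.contractLeft_ι_mul _ _ _
    rw [h] at h2
    have h3 : (CliffordAlgebra.contractLeft (Q := (0 : QuadraticForm ℚ M)) (b.coord i)
        (0 : ExteriorAlgebra ℚ M) : ExteriorAlgebra ℚ M) = 0 := map_zero _
    rw [h3] at h2
    have h4 := sub_eq_zero.1 h2.symm
    rw [← h4]; simp
  simp_rw [h1] at e
  rw [Finset.sum_const, Finset.card_univ, Fintype.card_fin, ← Nat.cast_smul_eq_nsmul ℚ,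
    ← sub_eq_zero, ← sub_smul, smul_eq_zero, sub_eq_zero] at e
  rcases e with e | e
  · exact absurd (by exact_mod_cast e.symm) hk
  · exact e

lemma map_top {m : ℕ} (b : Basis (Fin m) ℚ M) (f : M →ₗ[ℚ] M) (v : ExteriorAlgebra ℚ M)
    (hv : v ∈ ⋀[ℚ]^m M) : ExteriorAlgebra.map f v = LinearMap.det f • v := by
  rw [← ExteriorAlgebra.ιMulti_span_fixedDegree] at hv
  induction hv using Submodule.span_induction with
  | mem x hx =>
    obtain ⟨w, rfl⟩ := hx
    rw [ExteriorAlgebra.map_apply_ιMulti, ← sub_eq_zero,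
      ← Module.forall_dual_apply_eq_zero_iff ℚ]
    intro φ
    have h := (φ.compAlternatingMap (ExteriorAlgebra.ιMulti ℚ m)).eq_smul_basis_det b
    have h1 := congrArg (fun g => g (f ∘ w)) h
    have h2 := congrArg (fun g => g w) h
    simp only [AlternatingMap.smul_apply, LinearMap.compAlternatingMap_apply,
      Basis.det_comp, smul_eq_mul] at h1 h2
    rw [map_sub, map_smul, h1, h2, smul_eq_mul]; ring
  | zero => simp
  | add x y _ _ hx hy => rw [map_add, hx, hy, smul_add]
  | smul c x _ hx => rw [map_smul, hx, smul_comm]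

lemma det_permMap (N : ℕ) (σ : Equiv.Perm (Fin N)) :
    LinearMap.det (permMap N σ) = (Equiv.Perm.sign σ : ℚ) := by
  have : permMap N σ = Matrix.toLin' (σ⁻¹.permMatrix ℚ) := by
    ext1 x
    ext j
    simp [permMap, LinearMap.funLeft_apply, Pi.single_apply]
  rw [this, LinearMap.det_toLin', Matrix.det_permutation, Equiv.Perm.sign_inv]

lemma det_permU (N : ℕ) (σ : Equiv.Perm (Fin N)) :
    LinearMap.det (permU N σ) = (Equiv.Perm.sign σ : ℚ) := by
  have h := LinearMap.det_eq_det_mul_det (U N) (permMap N σ) (fun _ hx => permMap_mem σ hx)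
  have h2 : (U N).mapQ (U N) (permMap N σ) (fun _ hx => permMap_mem σ hx) = LinearMap.id := by
    refine LinearMap.ext fun y => ?_
    obtain ⟨x, rfl⟩ := Submodule.Quotient.mk_surjective _ y
    rw [Submodule.mapQ_apply, LinearMap.id_apply, Submodule.Quotient.eq, mem_U]
    have := Equiv.sum_comp σ⁻¹ x
    simp only [Pi.sub_apply, Finset.sum_sub_distrib, permMap, LinearMap.funLeft_apply]
    rw [this, sub_self]
  rw [h2, LinearMap.det_id, mul_one, det_permMap] at h
  exact h.symm

lemma finrank_U (N : ℕ) (hN : 0 < N) : finrank ℚ (U N) = N - 1 := by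
  have h := LinearMap.finrank_range_add_finrank_ker (sumMap N)
  have hs : LinearMap.range (sumMap N) = ⊤ := by
    rw [LinearMap.range_eq_top]
    intro c
    refine ⟨Pi.single ⟨0, hN⟩ c, ?_⟩
    simp [sumMap]
  rw [hs, finrank_top, finrank_self, finrank_fin_fun] at h
  change 1 + finrank ℚ (U N) = N at h
  omega

lemma sub_surj (N : ℕ) (hN : 2 ≤ N) (w : U N) :
    ∃ u : U N, u - permU N (finRotate N) u = w := by
  have hinj : Function.Injective
      ((LinearMap.id : U N →ₗ[ℚ] U N) - permU N (finRotate N)) := by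
    rw [← LinearMap.ker_eq_bot, LinearMap.ker_eq_bot']
    intro x hx
    rw [LinearMap.sub_apply, LinearMap.id_apply, sub_eq_zero] at hx
    have hx' : ∀ j, x.1 j = x.1 ((finRotate N)⁻¹ j) := fun j =>
      congrFun (congrArg Subtype.val hx) j
    have hx2 : ∀ j, x.1 (finRotate N j) = x.1 j := fun j => by
      rw [hx' (finRotate N j)]
      exact congrArg x.1 ((finRotate N).symm_apply_apply j)
    obtain ⟨k, rfl⟩ : ∃ k, N = k + 1 := ⟨N - 1, by omega⟩
    have hc : ∀ j, x.1 j = x.1 0 := by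
      intro j
      induction j using Fin.induction with
      | zero => rfl
      | succ i ih =>
        rw [← ih, ← hx2 i.castSucc, finRotate_apply, Fin.coeSucc_eq_succ]
    have hs := (mem_U x.1).1 x.2
    simp_rw [hc] at hs
    simp only [Finset.sum_const, Finset.card_univ, Fintype.card_fin, nsmul_eq_mul,
      mul_eq_zero] at hs
    have h0 : x.1 0 = 0 := by
      rcases hs with hs | hs
      · exact absurd hs (by positivity)
      · exact hs
    ext j
    rw [hc, h0]; rfl
  obtain ⟨u, hu⟩ := (LinearMap.injective_iff_surjective.1 hinj) w
  exact ⟨u, hu⟩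

end helpers

/-- Let `n ≥ 2` and let `σ = (1 2 … 2n) ∈ S_{2n}` be a `2n`-cycle.  The only
vector `v ∈ Λ^{2n−2} U_{2n}` with `σ·v = −v` is `v = 0`. -/
theorem stmt4 (n : ℕ) (hn : 2 ≤ n) (v : ExteriorAlgebra ℚ ↥(U (2*n)))
    (hv : v ∈ ⋀[ℚ]^(2*n-2) ↥(U (2*n)))
    (h : act (2*n) (finRotate (2*n)) v = -v) : v = 0 := by
  have b : Module.Basis (Fin (2*n-2+1)) ℚ (U (2*n)) :=
    Module.finBasisOfFinrankEq ℚ _ (by rw [finrank_U _ (by omega)]; omega)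
  have hdet : LinearMap.det (permU (2*n) (finRotate (2*n))) = -1 := by
    rw [det_permU, sign_finRotate, Odd.neg_one_pow (by rw [Nat.odd_iff]; omega)]
    simp
  refine eq_zero_of_wedge b (2*n-2) (by omega) v hv fun w => ?_
  obtain ⟨u, rfl⟩ := sub_surj (2*n) (by omega) w
  have hmem : ExteriorAlgebra.ι ℚ u * v ∈ ⋀[ℚ]^(2*n-2+1) ↥(U (2*n)) := by
    rw [ExteriorAlgebra.exteriorPower, pow_succ']
    exact Submodule.mul_mem_mul ⟨u, rfl⟩ hv
  have ht := map_top b (permU (2*n) (finRotate (2*n))) _ hmem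
  have h' : ExteriorAlgebra.map (permU (2*n) (finRotate (2*n))) v = -v := h
  rw [map_mul, ExteriorAlgebra.map_apply_ι, h', hdet, mul_neg, neg_smul, one_smul, neg_inj] at ht
  rw [map_sub, sub_mul, ht, sub_self]
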